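/- Let Λ = KQ/⟨all paths of length L+1⟩ be a truncated path algebra over an algebraically closed field and let S be a realizable semisimple sequence of dimension vector d. Then the Zariski closure of Rep S in Rep_d(Λ) equals Filt S, the set of all points x ∈ Rep_d(Λ) such that M_x possesses a submodule filtration governed by S. -/

import Mathlib

open Finset

/-! # Varieties of representations of a quiver with relations: basic setup -/

/-- The Zariski topology on the affine space `ι → K`: it is generated by the basic open
sets `D(p) = {x | p(x) ≠ 0}`, where `p` ranges over multivariate polynomials. -/
def zariskiTopology (ι K : Type) [CommSemiring K] : TopologicalSpace (ι → K) :=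
  TopologicalSpace.generateFrom
    {U | ∃ p : MvPolynomial ι K, U = {x | MvPolynomial.eval x p ≠ 0}}

/-- A finite quiver `Q`: vertices `Fin n`, arrows `Fin numArrows` with source and
target maps. -/
structure QuiverData where
  n : ℕ
  numArrows : ℕ
  src : Fin numArrows → Fin n
  tgt : Fin numArrows → Fin n

namespace QuiverData

variable (Q : QuiverData) (d : Fin Q.n → ℕ) (K : Type) [Field K]

/-- Index of the coordinates of the affine space of `d`-dimensional representations:
for each arrow `a` a matrix entry index in `Fin (d (tgt a)) × Fin (d (src a))`. -/
abbrev Coords := Σ a : Fin Q.numArrows, Fin (d (Q.tgt a)) × Fin (d (Q.src a))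

/-- The affine space of `d`-dimensional representations of `Q`:
a point `x` assigns to each arrow `a` a `d (tgt a) × d (src a)` matrix over `K`. -/
abbrev RepSpace := Coords Q d → K

/-- `RepSpace` carries the Zariski topology. -/
noncomputable instance instRepTop : TopologicalSpace (RepSpace Q d K) :=
  zariskiTopology (Coords Q d) K

/-- The underlying `K`-vector space `⊕ᵢ K^{dᵢ}` of any `d`-dimensional representation. -/
abbrev Carrier := (Σ i : Fin Q.n, Fin (d i)) → K

/-- The projection onto the component of the `i`-th vertex (action of the primitive
idempotent `eᵢ`). -/
def proj (i : Fin Q.n) : Carrier Q d K →ₗ[K] Carrier Q d K where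
  toFun m := fun jv => if jv.1 = i then m jv else 0
  map_add' u v := by
    funext jv; by_cases h : jv.1 = i <;> simp [h]
  map_smul' c u := by
    funext jv; by_cases h : jv.1 = i <;> simp [h]

/-- The action of the arrow `a` on the carrier space of the representation `x`. -/
noncomputable def arrowMap (x : RepSpace Q d K) (a : Fin Q.numArrows) :
    Carrier Q d K →ₗ[K] Carrier Q d K where
  toFun m := fun jv =>
    if h : jv.1 = Q.tgt a then
      ∑ w : Fin (d (Q.src a)), x ⟨a, (Fin.cast (congrArg d h) jv.2, w)⟩ * m ⟨Q.src a, w⟩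
    else 0
  map_add' u v := by
    funext jv
    by_cases h : jv.1 = Q.tgt a <;> simp [h, mul_add, Finset.sum_add_distrib]
  map_smul' c u := by
    funext jv
    by_cases h : jv.1 = Q.tgt a <;>
      simp [h, Finset.mul_sum, mul_comm, mul_left_comm, mul_assoc]

/-- The action of a word `w = [a_k, …, a_1]` of arrows on the representation `x`
(the arrow `a_1` acts first; non-composable words act as `0`). -/
noncomputable def wordMap (x : RepSpace Q d K) (w : List (Fin Q.numArrows)) :
    Module.End K (Carrier Q d K) :=
  (w.map fun a => (arrowMap Q d K x a : Module.End K (Carrier Q d K))).prod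

/-- The submodule `J^l · M_x` of the module `M_x`: the sum of the images of all words of
arrows of length `l` (for an admissible ideal, the radical acts through the arrows). -/
noncomputable def radPow (x : RepSpace Q d K) (l : ℕ) : Submodule K (Carrier Q d K) :=
  ⨆ w : {w : List (Fin Q.numArrows) // w.length = l},
    LinearMap.range (wordMap Q d K x w.1)

/-- The socle series of `M_x`: `socPow x l = soc_l(M_x)`. -/
noncomputable def socPow (x : RepSpace Q d K) : ℕ → Submodule K (Carrier Q d K)
  | 0 => ⨅ a, LinearMap.ker (arrowMap Q d K x a)
  | (l+1) => ⨅ a, (socPow x l).comap (arrowMap Q d K x a)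

/-- The dimension, at the vertex `i`, of a (vertex-graded) subspace `N`. -/
noncomputable def vdim (N : Submodule K (Carrier Q d K)) (i : Fin Q.n) : ℕ :=
  Module.finrank K (N.map (proj Q d K i))

/-- The radical layering `S(M_x) = (M/JM, JM/J²M, …, J^L M/J^{L+1} M)` of the module `M_x`,
recorded through the dimension vectors of its semisimple layers. -/
noncomputable def radLayering (L : ℕ) (x : RepSpace Q d K) :
    Fin (L+1) → Fin Q.n → ℕ :=
  fun l i => vdim Q d K (radPow Q d K x l) i - vdim Q d K (radPow Q d K x (l+1)) i

/-- The socle layering `S*(M_x) = (soc₀M, soc₁M/soc₀M, …)` of the module `M_x`, recorded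
through the dimension vectors of its semisimple layers. -/
noncomputable def socLayering (L : ℕ) (x : RepSpace Q d K) :
    Fin (L+1) → Fin Q.n → ℕ :=
  fun l i => vdim Q d K (socPow Q d K x l) i -
    (if (l : ℕ) = 0 then 0 else vdim Q d K (socPow Q d K x ((l : ℕ) - 1)) i)

end QuiverData

/-- The dominance order on semisimple sequences (recorded as sequences of dimension
vectors): `dominates S S'` means `S ≤ S'`, i.e. `⊕_{j≤l} S_j ⊆ ⊕_{j≤l} S'_j` for all `l`. -/
def dominates {n L : ℕ} (S S' : Fin (L+1) → Fin n → ℕ) : Prop :=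
  ∀ (l : Fin (L+1)) (i : Fin n),
    ∑ j ∈ Finset.univ.filter (fun j => j ≤ l), S j i ≤
      ∑ j ∈ Finset.univ.filter (fun j => j ≤ l), S' j i

/-- A semisimple sequence has dimension vector `d` if its layers' dimension vectors sum
to `d`. -/
def hasDimVec {n L : ℕ} (S : Fin (L+1) → Fin n → ℕ) (d : Fin n → ℕ) : Prop :=
  ∀ i, ∑ l, S l i = d i

namespace QuiverData

variable (Q : QuiverData) (d : Fin Q.n → ℕ) (K : Type) [Field K]

/-- Evaluation of a formal noncommutative polynomial in the vertices (`Sum.inl`) and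
arrows (`Sum.inr`) of `Q` on the representation `x`; an element of the path algebra `KQ`
is represented by such a polynomial. -/
noncomputable def evalRel (x : RepSpace Q d K) :
    FreeAlgebra K (Fin Q.n ⊕ Fin Q.numArrows) →ₐ[K] Module.End K (Carrier Q d K) :=
  FreeAlgebra.lift K
    (Sum.elim (fun i => (proj Q d K i : Module.End K (Carrier Q d K)))
      (fun a => (arrowMap Q d K x a : Module.End K (Carrier Q d K))))

/-- The affine variety `Rep_d(Λ)` for `Λ = KQ/I`, where the ideal `I` is generated by the
set `R` of relations: the set of points of `RepSpace` annihilating every relation. -/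
def RepVar (R : Set (FreeAlgebra K (Fin Q.n ⊕ Fin Q.numArrows))) :
    Set (RepSpace Q d K) :=
  {x | ∀ r ∈ R, evalRel Q d K x r = 0}

/-- The affine variety `Rep_d(Λ)` for the truncated path algebra
`Λ = KQ/⟨all paths of length L+1⟩`. -/
def TruncRepVar (L : ℕ) : Set (RepSpace Q d K) :=
  {x | ∀ w : List (Fin Q.numArrows), w.length = L + 1 → wordMap Q d K x w = 0}

/-- A submodule of `M_x`, i.e. a subspace stable under the arrows and the vertex
idempotents. -/
def Stable (x : RepSpace Q d K) (N : Submodule K (Carrier Q d K)) : Prop :=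
  (∀ a, N.map (arrowMap Q d K x a) ≤ N) ∧ ∀ i, N.map (proj Q d K i) ≤ N

/-- A submodule `N` of `M_x` is indecomposable (as a module). -/
def IndecompSub (x : RepSpace Q d K) (N : Submodule K (Carrier Q d K)) : Prop :=
  N ≠ ⊥ ∧ ∀ N₁ N₂ : Submodule K (Carrier Q d K),
    Stable Q d K x N₁ → Stable Q d K x N₂ → N₁ ≤ N → N₂ ≤ N →
    N₁ ⊔ N₂ = N → N₁ ⊓ N₂ = ⊥ → N₁ = ⊥ ∨ N₂ = ⊥

/-- The module `M_x` is indecomposable. -/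
def IndecompRep (x : RepSpace Q d K) : Prop :=
  IndecompSub Q d K x ⊤

/-- The module `M_x` is uniserial: its submodules form a chain. -/
def UniserialRep (x : RepSpace Q d K) : Prop :=
  ∀ N₁ N₂ : Submodule K (Carrier Q d K),
    Stable Q d K x N₁ → Stable Q d K x N₂ → N₁ ≤ N₂ ∨ N₂ ≤ N₁

/-- `M_x` decomposes as a direct sum of `s` indecomposable submodules whose dimension
vectors are `D 0, …, D (s-1)`. -/
def DecompWith (x : RepSpace Q d K) (s : ℕ) (D : Fin s → Fin Q.n → ℕ) : Prop :=
  ∃ N : Fin s → Submodule K (Carrier Q d K),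
    (∀ r, Stable Q d K x (N r)) ∧
    (∀ r, Disjoint (N r) (⨆ t, ⨆ (_ : t ≠ r), N t)) ∧
    (⨆ r, N r) = ⊤ ∧
    (∀ r, IndecompSub Q d K x (N r)) ∧
    ∀ r i, vdim Q d K (N r) i = D r i

/-- A homomorphism of representations `M_x → M_y` (for possibly different dimension
vectors): a linear map commuting with the arrow actions and the vertex projections. -/
def RepHom (dx dy : Fin Q.n → ℕ) (x : RepSpace Q dx K) (y : RepSpace Q dy K)
    (φ : Carrier Q dx K →ₗ[K] Carrier Q dy K) : Prop :=
  (∀ a, φ ∘ₗ arrowMap Q dx K x a = arrowMap Q dy K y a ∘ₗ φ) ∧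
  ∀ i, φ ∘ₗ proj Q dx K i = proj Q dy K i ∘ₗ φ

/-- The submodule `N` of `M_x` is isomorphic, as a representation, to `M_y`. -/
def SubrepIso (dy : Fin Q.n → ℕ) (x : RepSpace Q d K)
    (N : Submodule K (Carrier Q d K)) (y : RepSpace Q dy K) : Prop :=
  ∃ φ : Carrier Q d K →ₗ[K] Carrier Q dy K,
    N ⊓ LinearMap.ker φ = ⊥ ∧ N.map φ = ⊤ ∧
    (∀ a, ∀ m ∈ N, φ (arrowMap Q d K x a m) = arrowMap Q dy K y a (φ m)) ∧
    (∀ i, ∀ m ∈ N, φ (proj Q d K i m) = proj Q dy K i (φ m))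

/-- The representations `M_x` and `M_y` are isomorphic; the isomorphism classes are
exactly the orbits of the `GL(d)`-action. -/
def IsoRep (x y : RepSpace Q d K) : Prop :=
  ∃ φ : Carrier Q d K ≃ₗ[K] Carrier Q d K,
    (∀ a m, φ (arrowMap Q d K x a m) = arrowMap Q d K y a (φ m)) ∧
    ∀ i m, φ (proj Q d K i m) = proj Q d K i (φ m)

/-- The `GL(d)`-orbit of the point `x`, i.e. the set of points encoding modules
isomorphic to `M_x`. -/
def orbitSet (x : RepSpace Q d K) : Set (RepSpace Q d K) :=
  {y | IsoRep Q d K x y}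

/-- Given a family `P` of varieties `Rep_dv(Λ)` (one for every dimension vector `dv`),
`Ext¹_Λ(M_x, M_y) = 0`: every extension `0 → M_y → E → M_x → 0` of `Λ`-modules splits. -/
def Ext1Zero (P : ∀ dv : Fin Q.n → ℕ, Set (RepSpace Q dv K))
    (dx dy : Fin Q.n → ℕ) (x : RepSpace Q dx K) (y : RepSpace Q dy K) : Prop :=
  ∀ z ∈ P (fun i => dx i + dy i),
    ∀ (ι : Carrier Q dy K →ₗ[K] Carrier Q (fun i => dx i + dy i) K)
      (π : Carrier Q (fun i => dx i + dy i) K →ₗ[K] Carrier Q dx K),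
      RepHom Q K dy (fun i => dx i + dy i) y z ι →
      RepHom Q K (fun i => dx i + dy i) dx z x π →
      Function.Injective ι → Function.Surjective π →
      LinearMap.ker π = LinearMap.range ι →
      ∃ σ : Carrier Q dx K →ₗ[K] Carrier Q (fun i => dx i + dy i) K,
        RepHom Q K dx (fun i => dx i + dy i) x z σ ∧ π ∘ₗ σ = LinearMap.id

/-- The direct sum `C₁ ⊕ ⋯ ⊕ C_s` of subvarieties `C_r ⊆ Rep_{D r}(Λ)`: the set of
points `x ∈ Rep_d(Λ)` whose module decomposes as `M_x ≅ ⊕_r M^{(r)}` with `M^{(r)}`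
encoded by a point of `C_r`. -/
def DirectSumSet (s : ℕ) (D : Fin s → Fin Q.n → ℕ)
    (Cs : ∀ r : Fin s, Set (RepSpace Q (D r) K)) : Set (RepSpace Q d K) :=
  {x | ∃ N : Fin s → Submodule K (Carrier Q d K),
    (∀ r, Stable Q d K x (N r)) ∧
    (∀ r, Disjoint (N r) (⨆ t, ⨆ (_ : t ≠ r), N t)) ∧
    (⨆ r, N r) = ⊤ ∧
    ∀ r, ∃ y ∈ Cs r, SubrepIso Q d K (D r) x (N r) y}

/-- The endomorphism space `End_Λ(M_x)` of the module `M_x`. -/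
def endSpace (x : RepSpace Q d K) :
    Submodule K (Carrier Q d K →ₗ[K] Carrier Q d K) where
  carrier := {φ | RepHom Q K d d x x φ}
  add_mem' := by
    intro φ ψ hφ hψ
    exact ⟨fun a => by rw [LinearMap.add_comp, LinearMap.comp_add, hφ.1 a, hψ.1 a],
      fun i => by rw [LinearMap.add_comp, LinearMap.comp_add, hφ.2 i, hψ.2 i]⟩
  zero_mem' := by
    exact ⟨fun a => by simp, fun i => by simp⟩
  smul_mem' := by
    intro c φ hφ
    exact ⟨fun a => by rw [LinearMap.smul_comp, LinearMap.comp_smul, hφ.1 a],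
      fun i => by rw [LinearMap.smul_comp, LinearMap.comp_smul, hφ.2 i]⟩

/-- A word of arrows is a (composable) path when read in function-composition order. -/
def IsPathWord (w : List (Fin Q.numArrows)) : Prop :=
  List.Chain' (fun a b => Q.src a = Q.tgt b) w

/-- The quiver `Q` has no oriented cycles. -/
def Acyclic : Prop :=
  ∀ (a : Fin Q.numArrows) (w : List (Fin Q.numArrows)),
    IsPathWord Q (a :: w) →
      Q.tgt a ≠ Q.src ((a :: w).getLast (List.cons_ne_nil a w))

/-- A filtration `M_x = F 0 ⊇ F 1 ⊇ ⋯ ⊇ F (L+1) = 0` by submodules which is governed by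
the semisimple sequence `S`: each layer `F l / F (l+1)` is semisimple, isomorphic to `S l`. -/
def Governed (L : ℕ) (x : RepSpace Q d K) (S : Fin (L+1) → Fin Q.n → ℕ)
    (F : Fin (L+2) → Submodule K (Carrier Q d K)) : Prop :=
  F 0 = ⊤ ∧ F (Fin.last (L+1)) = ⊥ ∧
  (∀ l : Fin (L+1), F l.succ ≤ F l.castSucc) ∧
  (∀ (l : Fin (L+2)) (i : Fin Q.n), (F l).map (proj Q d K i) ≤ F l) ∧
  (∀ (l : Fin (L+1)) (a : Fin Q.numArrows),
      (F l.castSucc).map (arrowMap Q d K x a) ≤ F l.succ) ∧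
  ∀ (l : Fin (L+1)) (i : Fin Q.n),
      vdim Q d K (F l.castSucc) i = S l i + vdim Q d K (F l.succ) i

/-- `Filt S`: the set of points whose module has a filtration governed by `S`. -/
def FiltSet (L : ℕ) (S : Fin (L+1) → Fin Q.n → ℕ) : Set (RepSpace Q d K) :=
  {x | ∃ F, Governed Q d K L x S F}

/-- `Γ(M_x)`: the number of semisimple sequences which are realizable (i.e. occur as the
radical layering of a module in the variety `P`) and which govern some filtration of `M_x`. -/
noncomputable def gammaCount (L : ℕ) (P : Set (RepSpace Q d K))
    (x : RepSpace Q d K) : ℕ :=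
  Set.ncard {S : Fin (L+1) → Fin Q.n → ℕ |
    (∃ y ∈ P, radLayering Q d K L y = S) ∧ ∃ F, Governed Q d K L x S F}

/-- `Sstar` is the generic (= minimal, attained) socle layering of the modules in `W`. -/
def GenSoc (L : ℕ) (W : Set (RepSpace Q d K))
    (Sstar : Fin (L+1) → Fin Q.n → ℕ) : Prop :=
  (∀ x ∈ W, dominates Sstar (socLayering Q d K L x)) ∧
  ∃ x ∈ W, socLayering Q d K L x = Sstar

end QuiverData

namespace QuiverData

variable (Q : QuiverData)

/-- The `i`-th entry of the row vector `e·A` (over `ℤ`), where `A` is the adjacency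
matrix of `Q`: the sum of `e (src a)` over all arrows `a` ending at `i`. -/
def inflowZ (e : Fin Q.n → ℤ) (i : Fin Q.n) : ℤ :=
  ∑ a ∈ Finset.univ.filter (fun a => Q.tgt a = i), e (Q.src a)

/-- The `i`-th entry of the row vector `e·B` (over `ℤ`), where `B` is the transpose of
the adjacency matrix of `Q`. -/
def outflowZ (e : Fin Q.n → ℤ) (i : Fin Q.n) : ℤ :=
  ∑ a ∈ Finset.univ.filter (fun a => Q.src a = i), e (Q.tgt a)

/-- Partial sums `t⁽⁰⁾ + ⋯ + t⁽ˡ⁾` of the recursion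
`t⁽⁰⁾ = sup{0, d − d·A}`, `t⁽ˡ⁺¹⁾ = sup{0, (d − ∑_{k≤l} t⁽ᵏ⁾) − (d − ∑_{k≤l} t⁽ᵏ⁾)·A}`
(computed componentwise). -/
def cumLayer (dz : Fin Q.n → ℤ) : ℕ → Fin Q.n → ℤ
  | 0 => fun i => max 0 (dz i - inflowZ Q dz i)
  | (l+1) => fun i =>
      cumLayer dz l i +
        max 0 ((dz i - cumLayer dz l i) -
          inflowZ Q (fun j => dz j - cumLayer dz l j) i)

/-- The positive part `∑ᵢ eᵢ fᵢ` of the Euler form of `Q`. -/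
def eulerHomPart (e f : Fin Q.n → ℕ) : ℕ := ∑ i, e i * f i

/-- The negative part `∑_{α} e_{src α} f_{tgt α}` of the Euler form of `Q`, so that
`⟨e, f⟩ = eulerHomPart e f − eulerExtPart e f`. -/
def eulerExtPart (e f : Fin Q.n → ℕ) : ℕ :=
  ∑ a, e (Q.src a) * f (Q.tgt a)

end QuiverData

/-- The quiver with a single vertex and `r` loops. -/
def QuiverData.loopQuiver (r : ℕ) : QuiverData :=
  ⟨1, r, fun _ => 0, fun _ => 0⟩

namespace QuiverData

variable (Q : QuiverData) (d : Fin Q.n → ℕ) (K : Type) [Field K]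

/-- The variety `Rep_d(Λ)` for `Λ = KQ/⟨Rels⟩`, regarded as a topological space with the
(subspace) Zariski topology. -/
abbrev GenV (Rels : Set (FreeAlgebra K (Fin Q.n ⊕ Fin Q.numArrows))) :=
  {y : RepSpace Q d K // y ∈ RepVar Q d K Rels}

/-- The variety `Rep_d(Λ)` for the truncated path algebra
`Λ = KQ/⟨paths of length L+1⟩`, regarded as a topological space. -/
abbrev TruncV (L : ℕ) := {y : RepSpace Q d K // y ∈ TruncRepVar Q d K L}

end QuiverData

/-!
`Rep S ⊆ Filt S` because the radical filtration of a module in `Rep S` is governed by `S`.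

*Density.* Let `x ∈ Filt S`, with governing filtration `F`, and pick `y ∈ Rep S`. After a change of
bases the radical filtration of `M_y` is `F` as well. Then `F (l + 1)` is the sum of the images of
`F l` under the arrows of `y`, while the arrows of `x` map `F l` into `F (l + 1)`; on the line
through `x` and `y`, surjectivity of `⨁ₐ F l → F (l + 1)` fails at only finitely many points. All
other points of the line have radical filtration `F`, hence lie in `Rep S`, and they meet every
Zariski neighbourhood of `x`.

*Closedness.* `x ∈ Filt S` if and only if some `g ∈ GL(d)` moves `x` into the linear space of
representations lowering the standard coordinate flag. This space is stable under the Borel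
subgroup of upper triangular matrices, and `GL(d, E) = GL(d, V) · B(E)` for every valuation ring `V`
of a field `E`. Hence if a `V`-point becomes triangularizable over `E`, it is so already over `V`
and therefore over the residue field: this is the valuative criterion that underlies the properness
of the flag variety `GL(d) / B`.
-/

section LinearAlgebra

open Module

variable {K V : Type*} [Field K] [AddCommGroup V] [Module K V]

lemma exists_linearEquiv_map_eq [FiniteDimensional K V] {p q : Submodule K V}
    (h : finrank K p = finrank K q) : ∃ e : V ≃ₗ[K] V, p.map (e : V →ₗ[K] V) = q := by
  obtain ⟨p', hp⟩ := p.exists_isCompl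
  obtain ⟨q', hq⟩ := q.exists_isCompl
  have h' : finrank K p' = finrank K q' := by
    have hp_add := Submodule.finrank_add_eq_of_isCompl hp
    have hq_add := Submodule.finrank_add_eq_of_isCompl hq
    lia
  let e : V ≃ₗ[K] V := (p.prodEquivOfIsCompl p' hp).symm ≪≫ₗ
    (LinearEquiv.ofFinrankEq p q h).prodCongr (LinearEquiv.ofFinrankEq p' q' h') ≪≫ₗ
    q.prodEquivOfIsCompl q' hq
  refine ⟨e, Submodule.eq_of_le_of_finrank_eq ?_ ((e.finrank_map_eq p).trans h)⟩
  rintro _ ⟨v, hv, rfl⟩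
  have he : e v = LinearEquiv.ofFinrankEq p q h ⟨v, hv⟩ := by
    simp [e, Submodule.prodEquivOfIsCompl_symm_apply_left p p' hp ⟨v, hv⟩]
  exact he ▸ Subtype.property _

lemma finrank_add_finrank_comap_subtype_of_isCompl [FiniteDimensional K V]
    {N N' p : Submodule K V} (hN : IsCompl N N') (hp : N ≤ p) :
    finrank K N + finrank K (p.comap N'.subtype) = finrank K p := by
  have h_inf : N ⊓ (N' ⊓ p) = ⊥ := by rw [← inf_assoc, hN.inf_eq_bot, bot_inf_eq]
  have h_sup : N ⊔ (N' ⊓ p) = p := by rw [← sup_inf_assoc_of_le N' hp, hN.sup_eq_top, top_inf_eq]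
  rw [← Submodule.finrank_map_subtype_eq N' (p.comap N'.subtype), Submodule.map_comap_subtype,
    ← Submodule.finrank_sup_add_finrank_inf_eq, h_inf, h_sup, finrank_bot, add_zero]

lemma exists_linearEquiv_map_eq_of_le [FiniteDimensional K V] {N p q : Submodule K V}
    (hp : N ≤ p) (hq : N ≤ q) (h : finrank K p = finrank K q) :
    ∃ e : V ≃ₗ[K] V, p.map (e : V →ₗ[K] V) = q ∧ ∀ v ∈ N, e v = v := by
  obtain ⟨N', hN⟩ := N.exists_isCompl
  obtain ⟨e', he'⟩ : ∃ e' : N' ≃ₗ[K] N',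
      (p.comap N'.subtype).map (e' : N' →ₗ[K] N') = q.comap N'.subtype := by
    apply exists_linearEquiv_map_eq
    have hp_add := finrank_add_finrank_comap_subtype_of_isCompl hN hp
    have hq_add := finrank_add_finrank_comap_subtype_of_isCompl hN hq
    lia
  let e : V ≃ₗ[K] V := (N.prodEquivOfIsCompl N' hN).symm ≪≫ₗ
    (LinearEquiv.refl K N).prodCongr e' ≪≫ₗ N.prodEquivOfIsCompl N' hN
  have he (u : N) (w : N') : e (u + w) = u + e' w := by
    have : (N.prodEquivOfIsCompl N' hN).symm (u + w) = (u, w) := by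
      rw [LinearEquiv.symm_apply_eq, Submodule.coe_prodEquivOfIsCompl']
    simp [e, this]
  refine ⟨e, Submodule.eq_of_le_of_finrank_eq ?_ ((e.finrank_map_eq p).trans h), fun v hv ↦ ?_⟩
  · rintro _ ⟨v, hv, rfl⟩
    obtain ⟨u, hu, w, hw, rfl⟩ := Submodule.mem_sup.mp (hN.sup_eq_top ▸ Submodule.mem_top (x := v))
    have hwp : w ∈ p := (p.add_mem_iff_right (hp hu)).mp hv
    have hew : e' ⟨w, hw⟩ ∈ q.comap N'.subtype :=
      he' ▸ Submodule.mem_map_of_mem (f := (e' : N' →ₗ[K] N')) (p := p.comap N'.subtype) hwp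
    exact (he ⟨u, hu⟩ ⟨w, hw⟩).symm ▸ q.add_mem (hq hu) hew
  · simpa using he ⟨v, hv⟩ 0

lemma exists_linearEquiv_map_eq_of_antitone [FiniteDimensional K V] {F G : ℕ → Submodule K V}
    (hF : Antitone F) (hG : Antitone G) (h : ∀ l, finrank K (F l) = finrank K (G l))
    {n : ℕ} (hn : F n = ⊥) : ∃ e : V ≃ₗ[K] V, ∀ l, (F l).map (e : V →ₗ[K] V) = G l := by
  suffices ∀ m ≤ n, ∃ e : V ≃ₗ[K] V, ∀ l ≥ m, (F l).map (e : V →ₗ[K] V) = G l by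
    simpa using this 0 n.zero_le
  intro m hm
  induction hm using Nat.decreasingInduction with
  | self =>
    refine ⟨LinearEquiv.refl K V, fun l hl ↦ ?_⟩
    have hFl : F l = ⊥ := eq_bot_iff.mpr (hn ▸ hF hl)
    have hGl : G l = ⊥ := Submodule.finrank_eq_zero.mp (by rw [← h, hFl, finrank_bot])
    rw [hFl, hGl, Submodule.map_bot]
  | of_succ m _ ih =>
    obtain ⟨e, he⟩ := ih
    obtain ⟨e', he'_map, he'_fix⟩ : ∃ e' : V ≃ₗ[K] V,
        ((F m).map (e : V →ₗ[K] V)).map (e' : V →ₗ[K] V) = G m ∧ ∀ v ∈ G (m + 1), e' v = v := by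
      apply exists_linearEquiv_map_eq_of_le
      · exact he (m + 1) le_rfl ▸ Submodule.map_mono (hF m.le_succ)
      · exact hG m.le_succ
      · exact (e.finrank_map_eq (F m)).trans (h m)
    refine ⟨e ≪≫ₗ e', fun l hl ↦ ?_⟩
    rw [LinearEquiv.coe_trans, Submodule.map_comp]
    obtain rfl | hl := hl.eq_or_lt
    · exact he'_map
    rw [he l hl]
    ext v
    have hfix : ∀ v ∈ G l, e' v = v := fun v hv ↦ he'_fix v (hG hl hv)
    constructor
    · rintro ⟨u, hu, rfl⟩
      exact (hfix u hu).symm ▸ hu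
    · exact fun hv ↦ ⟨v, hv, hfix v hv⟩

end LinearAlgebra

section Pencil

open Module AffineMap Filter

variable {K V W ι : Type*} [Field K] [AddCommGroup V] [Module K V] [AddCommGroup W] [Module K W]

lemma eventually_surjective_lineMap [FiniteDimensional K W] (f : V →ₗ[K] W) {g : V →ₗ[K] W}
    (hg : Function.Surjective g) :
    ∀ᶠ t : K in cofinite, Function.Surjective (lineMap f g t : V →ₗ[K] W) := by
  obtain ⟨r, hr⟩ := g.exists_rightInverse_of_surjective (LinearMap.range_eq_top.mpr hg)
  let B : End K W := 1 - f ∘ₗ r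
  have h_comp (t : K) : (lineMap f g t : V →ₗ[K] W) ∘ₗ r = 1 - (1 - t) • B := by
    rw [lineMap_apply_module, LinearMap.add_comp, LinearMap.smul_comp, LinearMap.smul_comp, hr,
      ← End.one_eq_id]
    module
  -- Hence the composite is singular only if `(1 - t)⁻¹` is an eigenvalue of `B`.
  have h_unit (t : K) (ht : (1 - t)⁻¹ ∉ spectrum K B) : IsUnit (1 - (1 - t) • B) := by
    obtain h | h := eq_or_ne (1 - t) 0
    · simp [h]
    · have := (spectrum.notMem_iff.mp ht).smul (Units.mk0 _ h)
      simpa [Units.smul_def, smul_sub, Algebra.algebraMap_eq_smul_one, smul_smul, h] using this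
  have h_inj : Function.Injective fun t : K ↦ (1 - t)⁻¹ := inv_injective.comp sub_right_injective
  refine ((End.finite_spectrum B).preimage h_inj.injOn).subset fun t ht ↦ ?_
  by_contra h_spec
  have h_bij := (End.isUnit_iff _).mp (h_unit t h_spec)
  rw [← h_comp] at h_bij
  exact ht (Function.Surjective.of_comp h_bij.surjective)

lemma range_lsum [Fintype ι] [DecidableEq ι] (f : ι → V →ₗ[K] W) :
    LinearMap.range (LinearMap.lsum K (fun _ ↦ V) K f) = ⨆ i, LinearMap.range (f i) := by
  simp_rw [LinearMap.range_eq_map (LinearMap.lsum K (fun _ ↦ V) K f),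
    ← LinearMap.iSup_range_single, Submodule.map_iSup, ← LinearMap.range_comp]
  congr! with i
  ext v
  exact LinearMap.lsum_piSingle ..

lemma eventually_iSup_range_lineMap_eq_top [FiniteDimensional K W] [Finite ι]
    (f : ι → V →ₗ[K] W) {g : ι → V →ₗ[K] W}
    (hg : ⨆ i, LinearMap.range (g i) = ⊤) :
    ∀ᶠ t : K in cofinite, ⨆ i, LinearMap.range (lineMap (f i) (g i) t : V →ₗ[K] W) = ⊤ := by
  classical
  cases nonempty_fintype ι
  rw [← range_lsum, LinearMap.range_eq_top] at hg
  filter_upwards [eventually_surjective_lineMap (LinearMap.lsum K (fun _ ↦ V) K f) hg] with t ht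
  rw [← range_lsum, LinearMap.range_eq_top]
  convert ht
  exact (LinearMap.lsum K (fun _ ↦ V) K).toLinearMap.toAffineMap.apply_lineMap f g t

lemma iSup_map_eq_map_iSup_range_restrict {N : Submodule K V} {N' : Submodule K W}
    (f : ι → V →ₗ[K] W) (hf : ∀ i, ∀ v ∈ N, f i v ∈ N') :
    ⨆ i, N.map (f i) = (⨆ i, LinearMap.range ((f i).restrict (hf i))).map N'.subtype := by
  simp_rw [Submodule.map_iSup, ← LinearMap.range_comp, LinearMap.subtype_comp_restrict,
    LinearMap.range_domRestrict]

lemma eventually_iSup_map_lineMap_eq [FiniteDimensional K W] [Finite ι] {N : Submodule K V}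
    {N' : Submodule K W} {f g : ι → V →ₗ[K] W} (hf : ∀ i, N.map (f i) ≤ N')
    (hg : ⨆ i, N.map (g i) = N') :
    ∀ᶠ t : K in cofinite, ⨆ i, N.map (lineMap (f i) (g i) t : V →ₗ[K] W) = N' := by
  have hf' (i) : ∀ v ∈ N, f i v ∈ N' := Submodule.map_le_iff_le_comap.mp (hf i)
  have hg' (i) : ∀ v ∈ N, g i v ∈ N' :=
    Submodule.map_le_iff_le_comap.mp (hg ▸ le_iSup (fun i ↦ N.map (g i)) i)
  have hfg (t : K) (i) : ∀ v ∈ N, (lineMap (f i) (g i) t : V →ₗ[K] W) v ∈ N' := fun v hv ↦ by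
    rw [lineMap_apply_module]
    exact N'.add_mem (N'.smul_mem _ (hf' i v hv)) (N'.smul_mem _ (hg' i v hv))
  have h_top : ⨆ i, LinearMap.range ((g i).restrict (hg' i)) = ⊤ := by
    apply Submodule.map_injective_of_injective N'.injective_subtype
    rw [← iSup_map_eq_map_iSup_range_restrict, hg, Submodule.map_subtype_top]
  filter_upwards [eventually_iSup_range_lineMap_eq_top (fun i ↦ (f i).restrict (hf' i)) h_top]
    with t ht
  have h_restrict (i) : (lineMap (f i) (g i) t : V →ₗ[K] W).restrict (hfg t i) =
      lineMap ((f i).restrict (hf' i)) ((g i).restrict (hg' i)) t := by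
    ext v
    simp [lineMap_apply_module]
  simp_rw [iSup_map_eq_map_iSup_range_restrict _ (hfg t), h_restrict, ht, Submodule.map_subtype_top]

end Pencil

section ZariskiTopology

variable {ι K : Type} [Field K]

lemma mem_closure_zariskiTopology_iff {s : Set (ι → K)} {x : ι → K} :
    x ∈ @closure _ (zariskiTopology ι K) s ↔
      ∀ p : MvPolynomial ι K, MvPolynomial.eval x p ≠ 0 → ∃ y ∈ s, MvPolynomial.eval y p ≠ 0 := by
  let _ := zariskiTopology ι K
  have h_basis : TopologicalSpace.IsTopologicalBasis
      {U : Set (ι → K) | ∃ p : MvPolynomial ι K, U = {x | MvPolynomial.eval x p ≠ 0}} := by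
    refine ⟨?_, Set.sUnion_eq_univ_iff.mpr fun x ↦ ⟨_, ⟨1, rfl⟩, by simp⟩, rfl⟩
    rintro _ ⟨p, rfl⟩ _ ⟨q, rfl⟩ x hx
    exact ⟨_, ⟨p * q, rfl⟩, by simpa using hx, fun y hy ↦ by simpa using hy⟩
  rw [h_basis.mem_closure_iff]
  constructor
  · intro h p hp
    obtain ⟨y, hyp, hys⟩ := h _ ⟨p, rfl⟩ hp
    exact ⟨y, hys, hyp⟩
  · rintro h _ ⟨p, rfl⟩ hp
    obtain ⟨y, hys, hyp⟩ := h p hp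
    exact ⟨y, hyp, hys⟩

lemma eventually_eval_lineMap_ne_zero {ι K : Type*} [Field K] {p : MvPolynomial ι K} {x : ι → K}
    (hp : MvPolynomial.eval x p ≠ 0) (z : ι → K) :
    ∀ᶠ t : K in Filter.cofinite, MvPolynomial.eval (AffineMap.lineMap x z t) p ≠ 0 := by
  let P : Polynomial K :=
    MvPolynomial.aeval (fun i ↦ Polynomial.C (x i) + Polynomial.X * Polynomial.C (z i - x i)) p
  have hP (t : K) : P.eval t = MvPolynomial.eval (AffineMap.lineMap x z t) p := by
    rw [← Polynomial.coe_aeval_eq_eval, MvPolynomial.comp_aeval_apply, MvPolynomial.aeval_eq_eval]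
    congr! 2
    ext i
    simp [AffineMap.lineMap_apply_module', add_comm]
  have hP0 : P ≠ 0 := by
    rintro h
    exact hp (by simpa [h] using (hP 0).symm)
  refine (Polynomial.finite_setOfPred_isRoot hP0).subset fun t ht ↦ ?_
  simpa [← hP] using ht

end ZariskiTopology

section PolynomialSystems

open MvPolynomial
open scoped Topology

lemma aeval_aeval_sumElim {ι σ K R : Type*} [CommRing K] [CommRing R] [Algebra K R] (x : ι → K)
    (s : σ → R) (p : MvPolynomial (ι ⊕ σ) K) :
    aeval s (aeval (Sum.elim (C ∘ x) X) p) = aeval (Sum.elim (algebraMap K R ∘ x) s) p := by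
  rw [comp_aeval_apply]
  congr 2
  ext (i | j) <;> simp

/-- The system of equations `p(x, s) = 0`, for `p ∈ T`, with parameters `x` and unknowns `s`,
has a solution over the ring `R` in which the parameters live. -/
def SolvableAt {ι σ K R : Type*} [CommRing K] [CommRing R] [Algebra K R]
    (T : Set (MvPolynomial (ι ⊕ σ) K)) (x : ι → R) : Prop :=
  ∃ s : σ → R, ∀ p ∈ T, aeval (Sum.elim x s) p = 0

lemma aeval_pi_apply {ι K R Y : Type*} [CommRing K] [CommRing R] [Algebra K R] (f : ι → Y → R)
    (p : MvPolynomial ι K) (y : Y) : aeval f p y = aeval (fun i ↦ f i y) p :=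
  comp_aeval_apply f (Pi.evalAlgHom K (fun _ ↦ R) y) p

namespace SolvableAt

section

variable {ι σ K R R' Y : Type*} [CommRing K] [CommRing R] [Algebra K R] [CommRing R'] [Algebra K R']
  {T : Set (MvPolynomial (ι ⊕ σ) K)}

lemma map (f : R →ₐ[K] R') {x : ι → R} (h : SolvableAt T x) : SolvableAt T (f ∘ x) := by
  obtain ⟨s, hs⟩ := h
  refine ⟨f ∘ s, fun p hp ↦ ?_⟩
  rw [← Sum.comp_elim, Function.comp_def, ← comp_aeval_apply, hs p hp, map_zero]

lemma pi {x : ι → Y → R} (h : ∀ y, SolvableAt T fun i ↦ x i y) : SolvableAt T x := by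
  choose s hs using h
  refine ⟨fun j y ↦ s y j, fun p hp ↦ funext fun y ↦ ?_⟩
  rw [aeval_pi_apply, Pi.zero_apply, ← hs y p hp]
  congr 2
  exact Sum.comp_elim (fun v : Y → R ↦ v y) ..

end

lemma of_algebraMap {ι σ K k : Type*} [Field K] [IsAlgClosed K] [Finite σ] [Field k] [Algebra K k]
    {T : Set (MvPolynomial (ι ⊕ σ) K)} {x : ι → K} (h : SolvableAt T (algebraMap K k ∘ x)) :
    SolvableAt T x := by
  obtain ⟨s, hs⟩ := h
  obtain ⟨M, hM, h_le⟩ := Ideal.exists_le_maximal (RingHom.ker (aeval (R := K) s))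
    (RingHom.ker_ne_top _)
  obtain ⟨s', rfl⟩ := isMaximal_iff_eq_vanishingIdeal_singleton.mp hM
  refine ⟨s', fun p hp ↦ ?_⟩
  have h_mem : aeval (Sum.elim (C ∘ x) X) p ∈ vanishingIdeal K {s'} :=
    h_le ((aeval_aeval_sumElim x s p).trans (hs p hp))
  rw [mem_vanishingIdeal_singleton_iff] at h_mem
  exact (aeval_aeval_sumElim x s' p).symm.trans h_mem

end SolvableAt

lemma exists_valuationSubring_of_eval_ne_zero {ι K E : Type*} [Field K] [Field E] [Algebra K E]
    (x : ι → K) (f : MvPolynomial ι K →ₐ[K] E) (hf : ∀ p, eval x p ≠ 0 → f p ≠ 0) :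
    ∃ (V : ValuationSubring E) (_ : Algebra K V) (_ : IsScalarTower K V E) (y : ι → V),
      (∀ i, (y i : E) = f (X i)) ∧
        IsLocalRing.residue V ∘ y = algebraMap K (IsLocalRing.ResidueField V) ∘ x := by
  let m : Ideal (MvPolynomial ι K) := RingHom.ker (eval x)
  have : m.IsPrime := RingHom.ker_isPrime _
  let F : Localization.AtPrime m →+* E := IsLocalization.lift (M := m.primeCompl)
    (g := f.toRingHom) fun q ↦ isUnit_iff_ne_zero.mpr (hf q q.2)
  obtain ⟨V, hV, hV_local⟩ := IsLocalRing.exists_factor_valuationRing F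
  let g : MvPolynomial ι K →+* V :=
    (F.codRestrict V.toSubring hV).comp (algebraMap _ (Localization.AtPrime m))
  have hg (p) : (g p : E) = f p := IsLocalization.lift_eq _ p
  have hg_mem {p} (hp : p ∈ m) : IsLocalRing.residue V (g p) = 0 := by
    have h := (IsLocalization.AtPrime.to_map_mem_maximal_iff (Localization.AtPrime m) m p).mpr hp
    exact IsLocalRing.residue_eq_zero_iff _ |>.mpr fun hu ↦ h (hV_local.map_nonunit _ hu)
  let _ : Algebra K V := (g.comp C).toAlgebra
  refine ⟨V, inferInstance, .of_algebraMap_eq fun c ↦ ?_, fun i ↦ g (X i), fun i ↦ hg _,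
    funext fun i ↦ ?_⟩
  · exact ((hg (C c)).trans (f.commutes c)).symm
  · have h := hg_mem (p := X i - C (x i)) (by simp [m, RingHom.mem_ker])
    rwa [map_sub, map_sub, sub_eq_zero] at h

/-- The valuative criterion, for the projection of a Zariski-closed set to the parameter space. -/
theorem isClosed_setOf_solvableAt {ι σ K : Type} [Field K] [IsAlgClosed K] [Finite σ]
    {T : Set (MvPolynomial (ι ⊕ σ) K)}
    (hT : ∀ (E : Type) [Field E] [Algebra K E] (V : ValuationSubring E) [Algebra K V]
      [IsScalarTower K V E] (y : ι → V),
      SolvableAt T (fun i ↦ (y i : E)) → SolvableAt T y) :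
    IsClosed[zariskiTopology ι K] {x | SolvableAt T x} := by
  let _ := zariskiTopology ι K
  refine isClosed_of_closure_subset fun x hx ↦ ?_
  rw [mem_closure_zariskiTopology_iff] at hx
  let Y := {y : ι → K // SolvableAt T y}
  let ev : MvPolynomial ι K →ₐ[K] (Y → K) := aeval fun i y ↦ y.1 i
  have h_ev (p) (y : Y) : ev p y = eval y.1 p := by rw [aeval_pi_apply, aeval_eq_eval]
  let m : Ideal (MvPolynomial ι K) := RingHom.ker (eval x)
  have : m.IsPrime := RingHom.ker_isPrime _
  obtain ⟨P, hP, -, h_disj⟩ := Ideal.exists_le_prime_disjoint (⊥ : Ideal (Y → K))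
    (m.primeCompl.map ev) (by
      rw [Set.disjoint_left]
      rintro _ h_zero ⟨p, hp, rfl⟩
      obtain ⟨y, hy, hyp⟩ := hx p hp
      exact hyp ((h_ev p ⟨y, hy⟩).symm.trans (congrFun h_zero _)))
  let E := P.ResidueField
  let f : MvPolynomial ι K →ₐ[K] E := (IsScalarTower.toAlgHom K (Y → K) E).comp ev
  have hf (p) (hp : eval x p ≠ 0) : f p ≠ 0 := fun h ↦
    Set.disjoint_left.mp h_disj (Ideal.algebraMap_residueField_eq_zero.mp h) ⟨p, hp, rfl⟩
  obtain ⟨V, _, _, y, hyf, hyx⟩ := exists_valuationSubring_of_eval_ne_zero x f hf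
  have h_gen : SolvableAt T fun i ↦ (y i : E) := by
    convert (SolvableAt.pi fun y : Y ↦ y.2).map (IsScalarTower.toAlgHom K (Y → K) E) with i
    rw [hyf, AlgHom.comp_apply, aeval_X, Function.comp_apply]
  refine SolvableAt.of_algebraMap (k := IsLocalRing.ResidueField V) ?_
  rw [← hyx]
  exact (hT E V y h_gen).map (IsScalarTower.toAlgHom K V (IsLocalRing.ResidueField V))

end PolynomialSystems

section ValuationSubring

open Matrix

variable {E n : Type*} [Field E] [Fintype n] [DecidableEq n] (V : ValuationSubring E)

lemma exists_gl_mulVec_eq_zero_of_mem_of_ne (v : n → E) {s : Finset n} {c : n} (hc : c ∈ s) :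
    ∃ k : GL n V, (∀ i ∈ s, i ≠ c → (k.1.map V.subtype *ᵥ v) i = 0) ∧
      ∀ w : n → E, (∀ i ∈ s, w i = 0) → k.1.map V.subtype *ᵥ w = w := by
  obtain ⟨p, hp, hp_max⟩ := s.exists_max_image (fun i ↦ V.valuation (v i)) ⟨c, hc⟩
  choose! a ha using fun i hi ↦ (V.valuation_le_iff (v i) (v p)).mp (hp_max i hi)
  let u : n → V := fun i ↦ if i ∈ s ∧ i ≠ p then a i else 0
  let k : Matrix n n V := (1 - vecMulVec u (Pi.single p 1)).submatrix (Equiv.swap c p) id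
  have hk_det : IsUnit k.det := by
    have : (1 - vecMulVec u (Pi.single p 1)).det = 1 := by
      rw [vecMulVec_eq Unit, det_one_sub_mul_comm, det_unique]
      simp +contextual [u, mul_apply, Pi.single_apply]
    rw [det_permute, this, mul_one]
    exact (Equiv.Perm.sign _).isUnit.map (Int.castRingHom V)
  have hk (w : n → E) (i : n) : (k.map V.subtype *ᵥ w) i =
      w (Equiv.swap c p i) - u (Equiv.swap c p i) * w p := by
    simp [k, mulVec, dotProduct, sub_mul, one_apply, vecMulVec_apply, Pi.single_apply,
      apply_ite Subtype.val, Finset.sum_sub_distrib]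
  have h_swap {i} (hi : i ∈ s) : Equiv.swap c p i ∈ s := by
    rw [Equiv.swap_apply_def]
    split_ifs <;> assumption
  refine ⟨GeneralLinearGroup.mk'' k hk_det, fun i hi hic ↦ ?_, fun w hw ↦ funext fun i ↦ ?_⟩
  · have hip : Equiv.swap c p i ≠ p := by rwa [Ne, Equiv.swap_apply_eq_iff, Equiv.swap_apply_right]
    have hui : u (Equiv.swap c p i) = a (Equiv.swap c p i) := if_pos ⟨h_swap hi, hip⟩
    exact (hk v i).trans (by rw [hui, ha _ (h_swap hi), sub_self])
  · refine (hk w i).trans ?_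
    rw [hw p hp, mul_zero, sub_zero]
    by_cases hi : i ∈ s
    · rw [hw _ hi, hw _ (h_swap hi)]
    · rw [Equiv.swap_apply_of_ne_of_ne] <;> rintro rfl <;> contradiction

lemma exists_gl_mul_blockTriangular {n : ℕ} (g : Matrix (Fin n) (Fin n) E) :
    ∃ k : GL (Fin n) V, (k.1.map V.subtype * g).BlockTriangular id := by
  suffices ∀ m ≤ n, ∃ k : GL (Fin n) V, ∀ i j : Fin n, j < i → j < m →
      (k.1.map V.subtype * g) i j = 0 by
    obtain ⟨k, hk⟩ := this n le_rfl
    exact ⟨k, fun i j hij ↦ hk i j hij j.2⟩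
  intro m hm
  induction m with
  | zero => exact ⟨1, fun _ _ _ h ↦ absurd h (Nat.not_lt_zero _)⟩
  | succ m ih =>
    obtain ⟨k, hk⟩ := ih (Nat.le_of_succ_le hm)
    let c : Fin n := ⟨m, hm⟩
    obtain ⟨k', hk'_pivot, hk'_fix⟩ := exists_gl_mulVec_eq_zero_of_mem_of_ne V
      (fun i ↦ (k.1.map V.subtype * g) i c) (Finset.mem_Ici.mpr le_rfl : c ∈ Finset.Ici c)
    have h_col (j i) : ((k' * k).1.map V.subtype * g) i j =
        (k'.1.map V.subtype *ᵥ fun i ↦ (k.1.map V.subtype * g) i j) i := by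
      rw [Units.val_mul, Matrix.map_mul, Matrix.mul_assoc]
      rfl
    refine ⟨k' * k, fun i j hij hj ↦ ?_⟩
    rw [h_col]
    obtain hj | hj := (Nat.lt_succ_iff.mp hj).lt_or_eq
    · rw [hk'_fix]
      · exact hk i j hij hj
      · intro l hl
        exact hk l j (lt_of_lt_of_le (Fin.lt_def.mpr hj : j < c) (Finset.mem_Ici.mp hl)) hj
    · obtain rfl : j = c := Fin.ext hj
      exact hk'_pivot i (Finset.mem_Ici.mpr hij.le) hij.ne'

end ValuationSubring

namespace QuiverData

variable {Q : QuiverData} {d : Fin Q.n → ℕ}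

open Matrix

section BaseChange

variable {R R' : Type*}

/-- The matrix by which the arrow `a` acts in the representation with coordinates `x`. -/
def matOf (x : Coords Q d → R) (a : Fin Q.numArrows) :
    Matrix (Fin (d (Q.tgt a))) (Fin (d (Q.src a))) R :=
  .of fun j k ↦ x ⟨a, (j, k)⟩

lemma ext_matOf {x y : Coords Q d → R} (h : ∀ a, matOf x a = matOf y a) : x = y :=
  funext fun ⟨a, jk⟩ ↦ congr_fun₂ (h a) jk.1 jk.2

variable [CommRing R] [CommRing R']

/-- The action of `GL(d) = ∏ᵢ GL(dᵢ)` on representations by change of bases. -/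
def conj (g : ∀ i, GL (Fin (d i)) R) (x : Coords Q d → R) : Coords Q d → R :=
  fun c ↦ ((g (Q.tgt c.1)).1 * matOf x c.1 * (g (Q.src c.1))⁻¹.1) c.2.1 c.2.2

lemma matOf_conj (g : ∀ i, GL (Fin (d i)) R) (x : Coords Q d → R) (a : Fin Q.numArrows) :
    matOf (conj g x) a = (g (Q.tgt a)).1 * matOf x a * (g (Q.src a))⁻¹.1 := rfl

lemma conj_mul (g h : ∀ i, GL (Fin (d i)) R) (x : Coords Q d → R) :
    conj (g * h) x = conj g (conj h x) :=
  ext_matOf fun a ↦ by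
    simp only [matOf_conj, Pi.mul_apply, mul_inv_rev (g _), Units.val_mul, Matrix.mul_assoc]

lemma conj_one (x : Coords Q d → R) : conj 1 x = x :=
  ext_matOf fun a ↦ by simp [matOf_conj]

lemma conj_inv_conj (g : ∀ i, GL (Fin (d i)) R) (x : Coords Q d → R) :
    conj g⁻¹ (conj g x) = x := by
  rw [← conj_mul, inv_mul_cancel, conj_one]

lemma comp_conj (f : R →+* R') (g : ∀ i, GL (Fin (d i)) R) (x : Coords Q d → R) :
    f ∘ conj g x = conj (fun i ↦ GeneralLinearGroup.map f (g i)) (f ∘ x) := by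
  refine ext_matOf fun a ↦ ?_
  have h : matOf (f ∘ conj g x) a = (matOf (conj g x) a).map f := rfl
  rw [h, matOf_conj, Matrix.map_mul, Matrix.map_mul, matOf_conj, ← map_inv]
  rfl

end BaseChange

section Carrier

variable {K : Type} [Field K]

/-- The projection of the carrier `⊕ᵢ K^{dᵢ}` onto its component `K^{dᵢ}` at the vertex `i`. -/
def comp (i : Fin Q.n) : Carrier Q d K →ₗ[K] (Fin (d i) → K) :=
  LinearMap.funLeft K K fun j : Fin (d i) ↦ (⟨i, j⟩ : Σ i : Fin Q.n, Fin (d i))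

lemma carrier_ext {m m' : Carrier Q d K} (h : ∀ i, comp i m = comp i m') : m = m' :=
  funext fun ⟨i, j⟩ ↦ congr_fun (h i) j

lemma comp_surjective (i : Fin Q.n) :
    Function.Surjective (comp i : Carrier Q d K →ₗ[K] Fin (d i) → K) :=
  LinearMap.funLeft_surjective_of_injective _ _ _ fun _ _ h ↦ eq_of_heq (Sigma.mk.inj h).2

lemma comp_proj (i i' : Fin Q.n) (m : Carrier Q d K) :
    comp i' (proj Q d K i m) = if i' = i then comp i' m else 0 := by
  ext j
  by_cases h : i' = i <;> simp [comp, LinearMap.funLeft_apply, proj, h]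

lemma comp_arrowMap (x : RepSpace Q d K) (a : Fin Q.numArrows) (m : Carrier Q d K) :
    comp (Q.tgt a) (arrowMap Q d K x a m) = Matrix.mulVec (matOf x a) (comp (Q.src a) m) := by
  ext j
  simp [comp, LinearMap.funLeft_apply, arrowMap, matOf, Matrix.mulVec, dotProduct]

lemma comp_arrowMap_of_ne (x : RepSpace Q d K) {a : Fin Q.numArrows} {i : Fin Q.n}
    (h : i ≠ Q.tgt a) (m : Carrier Q d K) : comp i (arrowMap Q d K x a m) = 0 := by
  ext j
  simp [comp, LinearMap.funLeft_apply, arrowMap, h]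

lemma map_comp_map_proj (N : Submodule K (Carrier Q d K)) (i : Fin Q.n) :
    (N.map (proj Q d K i)).map (comp i) = N.map (comp i) := by
  rw [← Submodule.map_comp]
  congr 1
  exact LinearMap.ext fun m ↦ (comp_proj i i m).trans (if_pos rfl)

lemma vdim_eq_finrank_map_comp (N : Submodule K (Carrier Q d K)) (i : Fin Q.n) :
    vdim Q d K N i = Module.finrank K (N.map (comp i)) := by
  have h_inj : Function.Injective ((comp i).domRestrict (N.map (proj Q d K i))) := by
    rintro ⟨_, m, _, rfl⟩ ⟨_, m', _, rfl⟩ h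
    refine Subtype.ext (carrier_ext fun i' ↦ ?_)
    obtain rfl | hi := eq_or_ne i' i
    · exact h
    · simp [comp_proj, hi]
  rw [vdim, ← map_comp_map_proj, ← LinearMap.range_domRestrict (N.map _),
    LinearMap.finrank_range_of_inj h_inj]

/-- Vertex-graded subspaces of the carrier, i.e. those of the form `⊕ᵢ Nᵢ` with `Nᵢ ⊆ K^{dᵢ}`. -/
def IsGraded (N : Submodule K (Carrier Q d K)) : Prop :=
  ∀ i, N.map (proj Q d K i) ≤ N

lemma IsGraded.mem_iff {N : Submodule K (Carrier Q d K)} (hN : IsGraded N) {m : Carrier Q d K} :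
    m ∈ N ↔ ∀ i, comp i m ∈ N.map (comp i) := by
  refine ⟨fun hm i ↦ Submodule.mem_map_of_mem hm, fun h ↦ ?_⟩
  choose m' hm' h_comp using h
  have h_sum : m = ∑ i, proj Q d K i (m' i) := by
    refine carrier_ext fun i ↦ ?_
    simp [comp_proj, h_comp]
  exact h_sum ▸ N.sum_mem fun i _ ↦ hN i (Submodule.mem_map_of_mem (hm' i))

lemma IsGraded.ext {M N : Submodule K (Carrier Q d K)} (hM : IsGraded M) (hN : IsGraded N)
    (h : ∀ i, M.map (comp i) = N.map (comp i)) : M = N := by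
  ext m
  rw [hM.mem_iff, hN.mem_iff]
  simp only [h]

/-- The change of bases `g ∈ GL(d)` acting on the carrier. -/
def gauge (g : ∀ i, GL (Fin (d i)) K) : Carrier Q d K →ₗ[K] Carrier Q d K :=
  LinearMap.pi fun ij ↦ LinearMap.proj ij.2 ∘ₗ (g ij.1).1.mulVecLin ∘ₗ comp ij.1

lemma comp_gauge (g : ∀ i, GL (Fin (d i)) K) (i : Fin Q.n) (m : Carrier Q d K) :
    comp i (gauge g m) = Matrix.mulVec (g i).1 (comp i m) := rfl

lemma map_comp_map_gauge (g : ∀ i, GL (Fin (d i)) K) (N : Submodule K (Carrier Q d K))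
    (i : Fin Q.n) :
    (N.map (gauge g)).map (comp i) = (N.map (comp i)).map (g i).1.mulVecLin := by
  rw [← Submodule.map_comp, ← Submodule.map_comp]
  rfl

lemma vdim_map_gauge (g : ∀ i, GL (Fin (d i)) K) (N : Submodule K (Carrier Q d K)) (i : Fin Q.n) :
    vdim Q d K (N.map (gauge g)) i = vdim Q d K N i := by
  rw [vdim_eq_finrank_map_comp, map_comp_map_gauge, vdim_eq_finrank_map_comp]
  exact (Submodule.equivMapOfInjective _ (Matrix.mulVec_injective_of_isUnit (g i).isUnit)
    _).finrank_eq.symm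

lemma IsGraded.map_gauge {N : Submodule K (Carrier Q d K)} (hN : IsGraded N)
    (g : ∀ i, GL (Fin (d i)) K) : IsGraded (N.map (gauge g)) := by
  rintro i _ ⟨_, ⟨m, hm, rfl⟩, rfl⟩
  refine ⟨proj Q d K i m, hN i (Submodule.mem_map_of_mem hm), carrier_ext fun i' ↦ ?_⟩
  rw [comp_gauge, comp_proj, comp_proj, comp_gauge]
  split_ifs
  · rfl
  · exact Matrix.mulVec_zero _

lemma arrowMap_conj_comp_gauge (g : ∀ i, GL (Fin (d i)) K) (x : RepSpace Q d K)
    (a : Fin Q.numArrows) :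
    arrowMap Q d K (conj g x) a ∘ₗ gauge g = gauge g ∘ₗ arrowMap Q d K x a := by
  refine LinearMap.ext fun m ↦ carrier_ext fun i ↦ ?_
  rw [LinearMap.comp_apply, LinearMap.comp_apply, comp_gauge]
  by_cases h : i = Q.tgt a
  · subst h
    simp only [comp_arrowMap, matOf_conj, comp_gauge, Matrix.mulVec_mulVec, Matrix.mul_assoc,
      Units.inv_mul, Matrix.mul_one]
  · rw [comp_arrowMap_of_ne _ h, comp_arrowMap_of_ne _ h, Matrix.mulVec_zero]

end Carrier

section GradedSubspaces

variable {K : Type} [Field K] {M N : Submodule K (Carrier Q d K)}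

lemma vdim_bot (i : Fin Q.n) : vdim Q d K ⊥ i = 0 := by
  rw [vdim, Submodule.map_bot, finrank_bot]

lemma vdim_top (i : Fin Q.n) : vdim Q d K ⊤ i = d i := by
  rw [vdim_eq_finrank_map_comp, Submodule.map_top, LinearMap.range_eq_top.2 (comp_surjective i),
    finrank_top, Module.finrank_fin_fun]

lemma vdim_mono (h : M ≤ N) (i : Fin Q.n) : vdim Q d K M i ≤ vdim Q d K N i :=
  Submodule.finrank_mono (Submodule.map_mono h)

lemma isGraded_bot : IsGraded (⊥ : Submodule K (Carrier Q d K)) :=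
  fun _ ↦ (Submodule.map_bot _).le

lemma isGraded_top : IsGraded (⊤ : Submodule K (Carrier Q d K)) :=
  fun _ ↦ le_top

lemma IsGraded.eq_of_le_of_vdim_eq (hM : IsGraded M) (hN : IsGraded N) (hle : M ≤ N)
    (h : vdim Q d K M = vdim Q d K N) : M = N :=
  hM.ext hN fun i ↦ Submodule.eq_of_le_of_finrank_eq (Submodule.map_mono hle) <| by
    rw [← vdim_eq_finrank_map_comp, ← vdim_eq_finrank_map_comp, h]

end GradedSubspaces

section GradedFlags

variable {K : Type} [Field K] {T : ℕ → Fin Q.n → ℕ} {F G : ℕ → Submodule K (Carrier Q d K)}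

/-- Decreasing sequences of vertex-graded subspaces with prescribed dimension vectors `T l`. -/
structure IsGradedFlag (T : ℕ → Fin Q.n → ℕ) (F : ℕ → Submodule K (Carrier Q d K)) : Prop where
  antitone : Antitone F
  isGraded (l : ℕ) : IsGraded (F l)
  vdim_eq (l : ℕ) : vdim Q d K (F l) = T l

/-- The representation `x` maps each term of the flag `F` to the next one; equivalently, the terms
of `F` are submodules of `M_x` with semisimple successive quotients. -/
def LowersFlag (x : RepSpace Q d K) (F : ℕ → Submodule K (Carrier Q d K)) : Prop :=
  ∀ l a, (F l).map (arrowMap Q d K x a) ≤ F (l + 1)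

lemma IsGradedFlag.eq_bot (hF : IsGradedFlag T F) {l : ℕ} (h : T l = 0) : F l = ⊥ :=
  (isGraded_bot.eq_of_le_of_vdim_eq (hF.isGraded l) bot_le <| funext fun i ↦ by
    rw [vdim_bot, hF.vdim_eq, h, Pi.zero_apply]).symm

lemma IsGradedFlag.eq_top (hF : IsGradedFlag T F) {l : ℕ} (h : T l = d) : F l = ⊤ :=
  (hF.isGraded l).eq_of_le_of_vdim_eq isGraded_top le_top <| funext fun i ↦ by
    rw [vdim_top, hF.vdim_eq, h]

lemma IsGradedFlag.map_gauge (hF : IsGradedFlag T F) (g : ∀ i, GL (Fin (d i)) K) :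
    IsGradedFlag T fun l ↦ (F l).map (gauge g) where
  antitone _ _ h := Submodule.map_mono (hF.antitone h)
  isGraded l := (hF.isGraded l).map_gauge g
  vdim_eq l := funext fun i ↦ by rw [vdim_map_gauge, hF.vdim_eq]

lemma map_arrowMap_conj_map_gauge (g : ∀ i, GL (Fin (d i)) K) (x : RepSpace Q d K)
    (a : Fin Q.numArrows) (N : Submodule K (Carrier Q d K)) :
    (N.map (gauge g)).map (arrowMap Q d K (conj g x) a) =
      (N.map (arrowMap Q d K x a)).map (gauge g) := by
  rw [← Submodule.map_comp, arrowMap_conj_comp_gauge, Submodule.map_comp]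

lemma LowersFlag.conj {x : RepSpace Q d K} (h : LowersFlag x F) (g : ∀ i, GL (Fin (d i)) K) :
    LowersFlag (conj g x) fun l ↦ (F l).map (gauge g) := fun l a ↦ by
  rw [map_arrowMap_conj_map_gauge]
  exact Submodule.map_mono (h l a)

lemma exists_gl_mulVecLin_eq {n : ℕ} (e : (Fin n → K) ≃ₗ[K] (Fin n → K)) :
    ∃ g : GL (Fin n) K, g.1.mulVecLin = e := by
  refine ⟨GeneralLinearGroup.toLin.symm (.ofLinearEquiv e), ?_⟩
  rw [← GeneralLinearGroup.coe_toLin, MulEquiv.apply_symm_apply]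
  rfl

lemma IsGradedFlag.exists_map_gauge_eq (hF : IsGradedFlag T F) (hG : IsGradedFlag T G) {n : ℕ}
    (hn : T n = 0) : ∃ g : ∀ i, GL (Fin (d i)) K, ∀ l, (F l).map (gauge g) = G l := by
  have h_comp (i : Fin Q.n) : ∃ e : (Fin (d i) → K) ≃ₗ[K] (Fin (d i) → K),
      ∀ l, ((F l).map (comp i)).map (e : (Fin (d i) → K) →ₗ[K] _) = (G l).map (comp i) := by
    refine exists_linearEquiv_map_eq_of_antitone (fun _ _ h ↦ Submodule.map_mono (hF.antitone h))
      (fun _ _ h ↦ Submodule.map_mono (hG.antitone h)) (fun l ↦ ?_) (n := n) ?_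
    · rw [← vdim_eq_finrank_map_comp, ← vdim_eq_finrank_map_comp, hF.vdim_eq, hG.vdim_eq]
    · rw [hF.eq_bot hn, Submodule.map_bot]
  choose e he using h_comp
  choose g hg using fun i ↦ exists_gl_mulVecLin_eq (e i)
  refine ⟨g, fun l ↦ ((hF.isGraded l).map_gauge g).ext (hG.isGraded l) fun i ↦ ?_⟩
  rw [map_comp_map_gauge, hg, he]

end GradedFlags

section TailDim

variable {n L : ℕ} {S : Fin (L + 1) → Fin n → ℕ}

/-- The dimension vector of the `l`-th term of a filtration governed by `S`, i.e. that of
`S_l ⊕ ⋯ ⊕ S_L`. -/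
def tailDim (S : Fin (L + 1) → Fin n → ℕ) (l : ℕ) (i : Fin n) : ℕ :=
  ∑ k : Fin (L + 1) with l ≤ k.val, S k i

lemma tailDim_castSucc (S : Fin (L + 1) → Fin n → ℕ) (l : Fin (L + 1)) (i : Fin n) :
    tailDim S l i = S l i + tailDim S (l + 1) i := by
  have h_insert : ({k : Fin (L + 1) | l.val ≤ k.val} : Finset (Fin (L + 1))) =
      insert l ({k | l.val + 1 ≤ k.val} : Finset (Fin (L + 1))) := by
    ext k
    simp only [mem_filter_univ, mem_insert, Fin.ext_iff]
    lia
  rw [tailDim, h_insert, sum_insert (by simp), tailDim]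

lemma tailDim_of_lt (S : Fin (L + 1) → Fin n → ℕ) {l : ℕ} (hl : L < l) : tailDim S l = 0 :=
  funext fun i ↦ sum_eq_zero fun k hk ↦ absurd (mem_filter_univ k |>.1 hk) (by lia)

lemma tailDim_zero {d : Fin n → ℕ} (hS : hasDimVec S d) : tailDim S 0 = d :=
  funext fun i ↦ by simpa [tailDim] using hS i

lemma tailDim_antitone (S : Fin (L + 1) → Fin n → ℕ) : Antitone (tailDim S) := fun _ _ h _ ↦
  sum_le_sum_of_subset <| monotone_filter_right _ fun _ _ hk ↦ h.trans hk

lemma eq_tailDim {f : ℕ → Fin n → ℕ} (hf : ∀ l, L < l → f l = 0)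
    (hf_add : ∀ (l : Fin (L + 1)) i, f l i = S l i + f (l + 1) i) (l : ℕ) : f l = tailDim S l := by
  obtain hl | hl := lt_or_ge L l
  · rw [hf l hl, tailDim_of_lt S hl]
  · replace hl := Nat.le_succ_of_le hl
    induction hl using Nat.decreasingInduction with
    | self => rw [hf _ L.lt_succ_self, tailDim_of_lt S L.lt_succ_self]
    | of_succ l hl ih =>
      funext i
      rw [hf_add ⟨l, hl⟩ i, ih, tailDim_castSucc S ⟨l, hl⟩ i]

end TailDim

section Filtrations

variable {K : Type} [Field K] {L : ℕ} {S : Fin (L + 1) → Fin Q.n → ℕ}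

lemma clamp_eq_castSucc (l : Fin (L + 1)) : Fin.clamp l (L + 1) = l.castSucc :=
  Fin.ext (min_eq_left l.is_lt.le)

lemma clamp_succ_eq_succ (l : Fin (L + 1)) : Fin.clamp (l + 1) (L + 1) = l.succ :=
  Fin.ext (min_eq_left l.is_lt)

lemma Governed.isGradedFlag_clamp {x : RepSpace Q d K}
    {F : Fin (L + 2) → Submodule K (Carrier Q d K)} (hF : Governed Q d K L x S F) :
    IsGradedFlag (tailDim S) fun l ↦ F (Fin.clamp l (L + 1)) := by
  obtain ⟨-, h_last, h_succ, h_graded, -, h_vdim⟩ := hF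
  refine ⟨fun l m h ↦ Fin.antitone_iff_succ_le.2 h_succ (Fin.clamp_monotone h),
    fun l ↦ h_graded _, eq_tailDim (f := fun l ↦ vdim Q d K (F (Fin.clamp l (L + 1))))
      (fun l hl ↦ funext fun i ↦ ?_) fun l i ↦ ?_⟩
  · rw [Fin.clamp_eq_last l (L + 1) hl, h_last, vdim_bot, Pi.zero_apply]
  · rw [clamp_eq_castSucc, clamp_succ_eq_succ, h_vdim]

lemma Governed.lowersFlag_clamp {x : RepSpace Q d K}
    {F : Fin (L + 2) → Submodule K (Carrier Q d K)} (hF : Governed Q d K L x S F) :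
    LowersFlag x fun l ↦ F (Fin.clamp l (L + 1)) := by
  obtain ⟨-, h_last, -, -, h_lower, -⟩ := hF
  intro l a
  obtain hl | hl := lt_or_ge L l
  · beta_reduce
    rw [Fin.clamp_eq_last l (L + 1) hl, h_last, Submodule.map_bot]
    exact bot_le
  · have := h_lower ⟨l, Nat.lt_succ_of_le hl⟩ a
    rwa [← clamp_eq_castSucc, ← clamp_succ_eq_succ] at this

lemma mem_filtSet_iff (hS : hasDimVec S d) {x : RepSpace Q d K} :
    x ∈ FiltSet Q d K L S ↔ ∃ F, IsGradedFlag (tailDim S) F ∧ LowersFlag x F := by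
  constructor
  · rintro ⟨F, hF⟩
    exact ⟨_, hF.isGradedFlag_clamp, hF.lowersFlag_clamp⟩
  · rintro ⟨F, hF, hxF⟩
    refine ⟨fun l ↦ F l, hF.eq_top (tailDim_zero hS), hF.eq_bot (tailDim_of_lt S L.lt_succ_self),
      fun l ↦ hF.antitone l.1.le_succ, fun l ↦ hF.isGraded l, fun l ↦ hxF l, fun l i ↦ ?_⟩
    rw [hF.vdim_eq, hF.vdim_eq]
    exact tailDim_castSucc S l i

end Filtrations

section RadicalFiltration

variable {K : Type} [Field K] {L : ℕ}

lemma radPow_zero (x : RepSpace Q d K) : radPow Q d K x 0 = ⊤ :=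
  eq_top_iff.2 <| le_iSup_of_le ⟨[], rfl⟩ (LinearMap.range_id (R := K)).ge

lemma range_wordMap_cons (x : RepSpace Q d K) (a : Fin Q.numArrows) (w : List (Fin Q.numArrows)) :
    LinearMap.range (wordMap Q d K x (a :: w)) =
      (LinearMap.range (wordMap Q d K x w)).map (arrowMap Q d K x a) :=
  LinearMap.range_comp _ _

lemma radPow_succ (x : RepSpace Q d K) (l : ℕ) :
    radPow Q d K x (l + 1) = ⨆ a, (radPow Q d K x l).map (arrowMap Q d K x a) := by
  refine le_antisymm (iSup_le ?_) (iSup_le fun a ↦ ?_)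
  · rintro ⟨_ | ⟨a, w⟩, hw⟩
    · contradiction
    · rw [range_wordMap_cons]
      exact le_iSup_of_le a (Submodule.map_mono (le_iSup_of_le ⟨w, Nat.succ.inj hw⟩ le_rfl))
  · rw [radPow, Submodule.map_iSup]
    refine iSup_le ?_
    rintro ⟨w, hw⟩
    rw [← range_wordMap_cons]
    exact le_iSup_of_le ⟨a :: w, congr_arg _ hw⟩ le_rfl

lemma lowersFlag_radPow (x : RepSpace Q d K) : LowersFlag x (radPow Q d K x) := fun l a ↦
  (le_iSup (fun a ↦ (radPow Q d K x l).map (arrowMap Q d K x a)) a).trans (radPow_succ x l).ge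

lemma radPow_antitone (x : RepSpace Q d K) : Antitone (radPow Q d K x) :=
  antitone_nat_of_succ_le fun l ↦ by
    induction l with
    | zero => exact le_top.trans (radPow_zero x).ge
    | succ l ih =>
      calc radPow Q d K x (l + 2)
          = ⨆ a, (radPow Q d K x (l + 1)).map (arrowMap Q d K x a) := radPow_succ x (l + 1)
        _ ≤ ⨆ a, (radPow Q d K x l).map (arrowMap Q d K x a) :=
          iSup_mono fun a ↦ Submodule.map_mono ih
        _ = radPow Q d K x (l + 1) := (radPow_succ x l).symm

lemma isGraded_map_arrowMap (x : RepSpace Q d K) (a : Fin Q.numArrows)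
    (N : Submodule K (Carrier Q d K)) : IsGraded (N.map (arrowMap Q d K x a)) := by
  rintro i _ ⟨_, ⟨m, hm, rfl⟩, rfl⟩
  by_cases hi : i = Q.tgt a
  · refine ⟨m, hm, carrier_ext fun i' ↦ ?_⟩
    rw [comp_proj]
    split_ifs with hi'
    · rfl
    · exact comp_arrowMap_of_ne x (hi ▸ hi') m
  · have h_zero : proj Q d K i (arrowMap Q d K x a m) = 0 := carrier_ext fun i' ↦ by
      rw [comp_proj, map_zero]
      split_ifs with hi'
      · exact comp_arrowMap_of_ne x (hi' ▸ hi) m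
      · rfl
    exact h_zero ▸ zero_mem _

lemma IsGraded.iSup {ι : Sort*} {N : ι → Submodule K (Carrier Q d K)} (hN : ∀ j, IsGraded (N j)) :
    IsGraded (⨆ j, N j) := fun i ↦ by
  rw [Submodule.map_iSup]
  exact iSup_mono fun j ↦ hN j i

lemma isGraded_radPow (x : RepSpace Q d K) : ∀ l, IsGraded (radPow Q d K x l)
  | 0 => radPow_zero x ▸ isGraded_top
  | l + 1 => radPow_succ x l ▸ .iSup fun a ↦ isGraded_map_arrowMap x a _

lemma mem_truncRepVar_iff {x : RepSpace Q d K} :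
    x ∈ TruncRepVar Q d K L ↔ radPow Q d K x (L + 1) = ⊥ := by
  rw [radPow, iSup_eq_bot, Subtype.forall]
  simp only [LinearMap.range_eq_bot]
  rfl

lemma isGradedFlag_radPow_iff {S : Fin (L + 1) → Fin Q.n → ℕ} {x : RepSpace Q d K} :
    IsGradedFlag (tailDim S) (radPow Q d K x) ↔
      x ∈ TruncRepVar Q d K L ∧ radLayering Q d K L x = S := by
  rw [mem_truncRepVar_iff]
  constructor
  · intro h
    refine ⟨h.eq_bot (tailDim_of_lt S L.lt_succ_self), funext₂ fun l i ↦ ?_⟩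
    rw [radLayering, h.vdim_eq, h.vdim_eq, tailDim_castSucc, Nat.add_sub_cancel]
  · rintro ⟨h_bot, rfl⟩
    refine ⟨radPow_antitone x, isGraded_radPow x,
      eq_tailDim (f := fun l ↦ vdim Q d K (radPow Q d K x l))
        (fun l hl ↦ funext fun i ↦ ?_) fun l i ↦ ?_⟩
    · rw [eq_bot_mono (radPow_antitone x hl) h_bot, vdim_bot, Pi.zero_apply]
    · exact (Nat.sub_add_cancel (vdim_mono (radPow_antitone x l.1.le_succ) i)).symm

end RadicalFiltration

section Density

variable {K : Type} [Field K] {L : ℕ} {S : Fin (L + 1) → Fin Q.n → ℕ}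
  {F : ℕ → Submodule K (Carrier Q d K)}

lemma arrowMap_lineMap (x z : RepSpace Q d K) (t : K) (a : Fin Q.numArrows) :
    arrowMap Q d K (AffineMap.lineMap x z t) a =
      AffineMap.lineMap (arrowMap Q d K x a) (arrowMap Q d K z a) t := by
  ext m ⟨i, j⟩
  simp only [arrowMap, AffineMap.lineMap_apply_module]
  by_cases h : i = Q.tgt a
  · simp [h, add_mul, mul_assoc, sum_add_distrib, mul_sum]
  · simp [h]

/-- Each term of `F` is the radical of the previous one as a submodule of `M_z`; if moreover
`F 0 = ⊤`, then `F` is the radical filtration of `M_z`. -/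
def GeneratesFlag (z : RepSpace Q d K) (F : ℕ → Submodule K (Carrier Q d K)) : Prop :=
  ∀ l, ⨆ a, (F l).map (arrowMap Q d K z a) = F (l + 1)

lemma GeneratesFlag.radPow_eq {z : RepSpace Q d K} (hz : GeneratesFlag z F) (hF : F 0 = ⊤) :
    radPow Q d K z = F := by
  funext l
  induction l with
  | zero => rw [radPow_zero, hF]
  | succ l ih => rw [radPow_succ, ih, hz]

lemma generatesFlag_conj_radPow (g : ∀ i, GL (Fin (d i)) K) (x : RepSpace Q d K) :
    GeneratesFlag (conj g x) fun l ↦ (radPow Q d K x l).map (gauge g) := fun l ↦ by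
  simp only [map_arrowMap_conj_map_gauge, radPow_succ, Submodule.map_iSup]

lemma LowersFlag.eventually_generatesFlag_lineMap {x z : RepSpace Q d K} (hx : LowersFlag x F)
    (hz : GeneratesFlag z F) (hF : ∀ l, L < l → F l = ⊥) :
    ∀ᶠ t : K in Filter.cofinite, GeneratesFlag (AffineMap.lineMap x z t) F := by
  have h_small : ∀ᶠ t : K in Filter.cofinite, ∀ l ∈ Finset.range (L + 1),
      ⨆ a, (F l).map (arrowMap Q d K (AffineMap.lineMap x z t) a) = F (l + 1) := by
    simp only [Filter.eventually_all_finset, arrowMap_lineMap]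
    exact fun l _ ↦ eventually_iSup_map_lineMap_eq (hx l) (hz l)
  filter_upwards [h_small] with t ht l
  obtain hl | hl := lt_or_ge L l
  · simp only [hF l hl, hF (l + 1) (hl.trans l.lt_succ_self), Submodule.map_bot, iSup_bot]
  · exact ht l (Finset.mem_range_succ_iff.2 hl)

theorem exists_radLayering_eq_of_mem_filtSet [Infinite K] (hS : hasDimVec S d)
    (hreal : ∃ y ∈ TruncRepVar Q d K L, radLayering Q d K L y = S) {x : RepSpace Q d K}
    (hx : x ∈ FiltSet Q d K L S) {p : MvPolynomial (Coords Q d) K}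
    (hp : MvPolynomial.eval x p ≠ 0) :
    ∃ y ∈ TruncRepVar Q d K L, radLayering Q d K L y = S ∧ MvPolynomial.eval y p ≠ 0 := by
  obtain ⟨F, hF, hxF⟩ := (mem_filtSet_iff hS).1 hx
  obtain ⟨y, hy⟩ := hreal
  obtain ⟨g, hg⟩ := (isGradedFlag_radPow_iff.2 hy).exists_map_gauge_eq hF
    (tailDim_of_lt S L.lt_succ_self)
  have hz : GeneratesFlag (conj g y) F := funext hg ▸ generatesFlag_conj_radPow g y
  obtain ⟨t, ht_flag, ht_eval⟩ := ((hxF.eventually_generatesFlag_lineMap hz fun l hl ↦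
    hF.eq_bot (tailDim_of_lt S hl)).and (eventually_eval_lineMap_ne_zero hp (conj g y))).exists
  have h_rad := ht_flag.radPow_eq (hF.eq_top (tailDim_zero hS))
  obtain ⟨h_trunc, h_layer⟩ := isGradedFlag_radPow_iff.1 (h_rad ▸ hF)
  exact ⟨_, h_trunc, h_layer, ht_eval⟩

end Density

section CoordinateFlags

variable {T : ℕ → Fin Q.n → ℕ}

section Ring

variable {R R' : Type*} [CommRing R] [CommRing R']

/-- Every arrow `a` maps the span of the first `T l (src a)` standard basis vectors into the span
of the first `T (l + 1) (tgt a)` ones. Phrased through matrix entries, this makes sense over rings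
and is a system of polynomial equations in `x`. -/
def LowersCoordFlag (T : ℕ → Fin Q.n → ℕ) (x : Coords Q d → R) : Prop :=
  ∀ l a (j : Fin (d (Q.tgt a))) (k : Fin (d (Q.src a))),
    k < T l (Q.src a) → T (l + 1) (Q.tgt a) ≤ j → matOf x a j k = 0

lemma lowersCoordFlag_comp_iff {f : R →+* R'} (hf : Function.Injective f) {x : Coords Q d → R} :
    LowersCoordFlag T (f ∘ x) ↔ LowersCoordFlag T x :=
  forall₄_congr fun _ _ _ _ ↦ imp_congr_right fun _ ↦ imp_congr_right fun _ ↦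
    map_eq_zero_iff f hf

lemma LowersCoordFlag.conj_of_blockTriangular {x : Coords Q d → R} (hx : LowersCoordFlag T x)
    {b : ∀ i, GL (Fin (d i)) R} (hb : ∀ i, (b i).1.BlockTriangular id) :
    LowersCoordFlag T (conj b x) := by
  intro l a j k hk hj
  have hb_inv : (b (Q.src a))⁻¹.1.BlockTriangular id := by
    have := (b (Q.src a)).invertible
    rw [coe_units_inv]
    exact blockTriangular_inv_of_blockTriangular (hb _)
  rw [matOf_conj, Matrix.mul_apply]
  refine sum_eq_zero fun q _ ↦ ?_
  obtain hq | hq := lt_or_ge k q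
  · rw [hb_inv hq, mul_zero]
  · rw [Matrix.mul_apply, sum_eq_zero, zero_mul]
    intro p _
    obtain hp | hp := lt_or_ge p j
    · rw [hb _ hp, zero_mul]
    · rw [hx l a p q (lt_of_le_of_lt hq hk) (hj.trans hp), mul_zero]

end Ring

variable {K : Type} [Field K]

/-- The `l`-th term is spanned, at each vertex `i`, by the first `T l i` standard basis vectors. -/
noncomputable def coordFlag (K : Type) [Field K] (d : Fin Q.n → ℕ) (T : ℕ → Fin Q.n → ℕ) (l : ℕ) :
    Submodule K (Carrier Q d K) :=
  Pi.spanSubset K {ij | ij.2 < T l ij.1}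

lemma mem_coordFlag {l : ℕ} {m : Carrier Q d K} :
    m ∈ coordFlag K d T l ↔ ∀ i (j : Fin (d i)), T l i ≤ j → m ⟨i, j⟩ = 0 := by
  simp [coordFlag, Pi.mem_spanSubset_iff, Sigma.forall]

lemma isGraded_coordFlag (l : ℕ) : IsGraded (coordFlag K d T l) := by
  rintro i _ ⟨m, hm, rfl⟩
  refine mem_coordFlag.2 fun i' j hj ↦ ?_
  rw [proj, LinearMap.coe_mk, AddHom.coe_mk, mem_coordFlag.1 hm i' j hj, ite_self]

lemma map_comp_coordFlag (l : ℕ) (i : Fin Q.n) :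
    (coordFlag K d T l).map (comp i) = Pi.spanSubset K {j : Fin (d i) | j < T l i} := by
  refine le_antisymm ?_ fun v hv ↦ ?_
  · rintro _ ⟨m, hm, rfl⟩
    exact Pi.mem_spanSubset_iff.2 fun j hj ↦ mem_coordFlag.1 hm i j (not_lt.1 hj)
  · obtain ⟨m, rfl⟩ := comp_surjective i v
    refine ⟨proj Q d K i m, mem_coordFlag.2 fun i' j hj ↦ ?_, (comp_proj i i m).trans (if_pos rfl)⟩
    refine (congr_fun (comp_proj i i' m) j).trans ?_
    split_ifs with hi
    · subst hi
      exact Pi.mem_spanSubset_iff.1 hv j hj.not_gt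
    · rfl

lemma isGradedFlag_coordFlag (hT : Antitone T) (hTd : ∀ l, T l ≤ d) :
    IsGradedFlag T (coordFlag K d T) where
  antitone _ _ h _ hm := mem_coordFlag.2 fun i j hj ↦ mem_coordFlag.1 hm i j ((hT h i).trans hj)
  isGraded := isGraded_coordFlag
  vdim_eq l := funext fun i ↦ by
    have h_card : {j : Fin (d i) | j < T l i} = ({j | j < T l i} : Finset (Fin (d i))) := by simp
    rw [vdim_eq_finrank_map_comp, map_comp_coordFlag, Pi.dim_spanSubset, h_card,
      Set.ncard_coe_finset, Fin.card_filter_val_lt, min_eq_right (hTd l i)]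

lemma lowersFlag_coordFlag_iff {x : RepSpace Q d K} :
    LowersFlag x (coordFlag K d T) ↔ LowersCoordFlag T x := by
  constructor
  · intro h l a j k hk hj
    have h_single : comp (Q.src a) (Pi.single ⟨Q.src a, k⟩ 1 : Carrier Q d K) = Pi.single k 1 := by
      ext k'
      simp [comp, LinearMap.funLeft_apply, Pi.single_apply]
    have h_mem : Pi.single ⟨Q.src a, k⟩ 1 ∈ coordFlag K d T l := mem_coordFlag.2 fun i j' hj' ↦ by
      refine Pi.single_eq_of_ne ?_ _
      rintro ⟨⟩
      exact hk.not_ge hj'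
    have h_image := mem_coordFlag.1 (h l a (Submodule.mem_map_of_mem h_mem)) (Q.tgt a) j hj
    have h_entry := congr_fun (comp_arrowMap x a (Pi.single ⟨Q.src a, k⟩ 1)) j
    rw [h_single, Matrix.mulVec_single_one] at h_entry
    exact h_entry.symm.trans h_image
  · rintro h l a _ ⟨m, hm, rfl⟩
    refine mem_coordFlag.2 fun i j hj ↦ ?_
    by_cases hi : i = Q.tgt a
    · subst hi
      refine (congr_fun (comp_arrowMap x a m) j).trans ?_
      rw [Matrix.mulVec, dotProduct]
      refine sum_eq_zero fun k _ ↦ ?_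
      obtain hk | hk := lt_or_ge k.val (T l (Q.src a))
      · rw [h l a j k hk hj, zero_mul]
      · exact mul_eq_zero_of_right _ (mem_coordFlag.1 hm _ k hk)
    · exact congr_fun (comp_arrowMap_of_ne x hi m) j

lemma mem_filtSet_iff_exists_conj {L : ℕ} {S : Fin (L + 1) → Fin Q.n → ℕ} (hS : hasDimVec S d)
    {x : RepSpace Q d K} :
    x ∈ FiltSet Q d K L S ↔ ∃ g, LowersCoordFlag (tailDim S) (conj g x) := by
  have h_coord : IsGradedFlag (tailDim S) (coordFlag K d (tailDim S)) :=
    isGradedFlag_coordFlag (tailDim_antitone S)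
      fun l ↦ (tailDim_antitone S l.zero_le).trans (tailDim_zero hS).le
  simp only [mem_filtSet_iff hS, ← lowersFlag_coordFlag_iff]
  constructor
  · rintro ⟨F, hF, hxF⟩
    obtain ⟨g, hg⟩ := hF.exists_map_gauge_eq h_coord (tailDim_of_lt S L.lt_succ_self)
    exact ⟨g, funext hg ▸ hxF.conj g⟩
  · rintro ⟨g, hg⟩
    exact ⟨_, h_coord.map_gauge g⁻¹, conj_inv_conj g x ▸ hg.conj g⁻¹⟩

end CoordinateFlags

section Closedness

variable {K : Type} [Field K] {T : ℕ → Fin Q.n → ℕ}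

/-- The positions of the matrix entries of an element of `∏ᵢ Mat(dᵢ)`. -/
abbrev EntryIndex (d : Fin Q.n → ℕ) := Σ i, Fin (d i) × Fin (d i)

/-- The matrix at the vertex `i` of the element of `∏ᵢ Mat(dᵢ)` with entries `s`. -/
def matAt {R : Type*} (s : EntryIndex d → R) (i : Fin Q.n) : Matrix (Fin (d i)) (Fin (d i)) R :=
  .of fun j k ↦ s ⟨i, (j, k)⟩

open MvPolynomial in
/-- The polynomial system with parameters `x` and unknowns `(g, h)` in `∏ᵢ Mat(dᵢ)²` which says
that `h` is the inverse of `g` and that `conj g x` satisfies `LowersCoordFlag T`. -/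
def coordFlagSystem (K : Type) [Field K] (d : Fin Q.n → ℕ) (T : ℕ → Fin Q.n → ℕ) :
    Set (MvPolynomial (Coords Q d ⊕ (EntryIndex d ⊕ EntryIndex d)) K) :=
  let x : Coords Q d → MvPolynomial (Coords Q d ⊕ (EntryIndex d ⊕ EntryIndex d)) K := X ∘ Sum.inl
  let g : EntryIndex d → MvPolynomial (Coords Q d ⊕ (EntryIndex d ⊕ EntryIndex d)) K :=
    X ∘ Sum.inr ∘ Sum.inl
  let h : EntryIndex d → MvPolynomial (Coords Q d ⊕ (EntryIndex d ⊕ EntryIndex d)) K :=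
    X ∘ Sum.inr ∘ Sum.inr
  {p | ∃ i j k, (matAt g i * matAt h i) j k - (1 : Matrix (Fin (d i)) _ _) j k = p} ∪
    {p | ∃ l a j k, k.val < T l (Q.src a) ∧ T (l + 1) (Q.tgt a) ≤ j.val ∧
      (matAt g (Q.tgt a) * matOf x a * matAt h (Q.src a)) j k = p}

lemma aeval_coordFlagSystem_eq_zero_iff {R : Type*} [CommRing R] [Algebra K R]
    {x : Coords Q d → R} {g h : EntryIndex d → R} :
    (∀ p ∈ coordFlagSystem K d T, MvPolynomial.aeval (Sum.elim x (Sum.elim g h)) p = 0) ↔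
      (∀ i, matAt g i * matAt h i = 1) ∧ ∀ l a (j : Fin (d (Q.tgt a))) (k : Fin (d (Q.src a))),
        k < T l (Q.src a) → T (l + 1) (Q.tgt a) ≤ j →
          (matAt g (Q.tgt a) * matOf x a * matAt h (Q.src a)) j k = 0 := by
  let f := MvPolynomial.aeval (R := K) (Sum.elim x (Sum.elim g h))
  have hx (a) : (matOf (MvPolynomial.X ∘ Sum.inl) a).map f = matOf x a :=
    Matrix.ext fun j k ↦ by simp [matOf, f]
  have hg (i) : (matAt (MvPolynomial.X ∘ Sum.inr ∘ Sum.inl) i).map f = matAt g i :=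
    Matrix.ext fun j k ↦ by simp [matAt, f]
  have hh (i) : (matAt (MvPolynomial.X ∘ Sum.inr ∘ Sum.inr) i).map f = matAt h i :=
    Matrix.ext fun j k ↦ by simp [matAt, f]
  simp only [coordFlagSystem, Set.mem_union, or_imp, forall_and]
  refine and_congr ?_ ?_
  · simp only [← hg, ← hh, ← Matrix.map_mul, ← Matrix.map_one f (map_zero f) (map_one f)]
    refine ⟨fun H i ↦ Matrix.ext fun j k ↦ sub_eq_zero.1 ?_, ?_⟩
    · exact (map_sub f _ _).symm.trans (H _ ⟨i, j, k, rfl⟩)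
    · rintro H _ ⟨i, j, k, rfl⟩
      exact (map_sub f _ _).trans (sub_eq_zero.2 (congr_fun₂ (H i) j k))
  · simp only [← hx, ← hg, ← hh, ← Matrix.map_mul]
    exact ⟨fun H l a j k hk hj ↦ H _ ⟨l, a, j, k, hk, hj, rfl⟩,
      by rintro H _ ⟨l, a, j, k, hk, hj, rfl⟩; exact H l a j k hk hj⟩

lemma solvableAt_coordFlagSystem_iff {R : Type*} [CommRing R] [Algebra K R] {x : Coords Q d → R} :
    SolvableAt (coordFlagSystem K d T) x ↔ ∃ g, LowersCoordFlag T (conj g x) := by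
  constructor
  · rintro ⟨s, hs⟩
    rw [← Sum.elim_comp_inl_inr s, aeval_coordFlagSystem_eq_zero_iff] at hs
    exact ⟨fun i ↦ ⟨_, _, hs.1 i, mul_eq_one_comm.1 (hs.1 i)⟩, hs.2⟩
  · rintro ⟨g, hg⟩
    exact ⟨Sum.elim (fun e ↦ (g e.1).1 e.2.1 e.2.2) fun e ↦ (g e.1)⁻¹.1 e.2.1 e.2.2,
      aeval_coordFlagSystem_eq_zero_iff.2 ⟨fun i ↦ (g i).mul_inv, hg⟩⟩

lemma exists_lowersCoordFlag_conj_of_valuationSubring {E : Type*} [Field E] (V : ValuationSubring E)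
    {y : Coords Q d → V} (h : ∃ g, LowersCoordFlag T (conj g (V.subtype ∘ y))) :
    ∃ g, LowersCoordFlag T (conj g y) := by
  obtain ⟨g, hg⟩ := h
  choose k hk using fun i ↦ exists_gl_mul_blockTriangular V (g i)⁻¹.1
  refine ⟨k, (lowersCoordFlag_comp_iff V.subtype_injective).1 ?_⟩
  have h_tri := hg.conj_of_blockTriangular
    (b := (fun i ↦ GeneralLinearGroup.map V.subtype (k i)) * g⁻¹) hk
  rwa [← conj_mul, inv_mul_cancel_right, ← comp_conj] at h_tri

theorem isClosed_filtSet [IsAlgClosed K] {L : ℕ} {S : Fin (L + 1) → Fin Q.n → ℕ}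
    (hS : hasDimVec S d) : IsClosed (FiltSet Q d K L S) := by
  have h_eq : FiltSet Q d K L S = {x | SolvableAt (coordFlagSystem K d (tailDim S)) x} :=
    Set.ext fun x ↦ (mem_filtSet_iff_exists_conj hS).trans solvableAt_coordFlagSystem_iff.symm
  rw [h_eq]
  refine isClosed_setOf_solvableAt fun E _ _ V _ _ y h ↦ ?_
  rw [solvableAt_coordFlagSystem_iff] at h ⊢
  exact exists_lowersCoordFlag_conj_of_valuationSubring V h

end Closedness

end QuiverData

open QuiverData in
/-- For a truncated path algebra `Λ` and a realizable semisimple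
sequence `S` of dimension vector `d`, the Zariski closure of `Rep S` in `Rep_d(Λ)`
equals `Filt S`, the set of points whose module has a submodule filtration governed
by `S`. -/
theorem statement_16 (K : Type) [Field K] [IsAlgClosed K]
    (Q : QuiverData) (L : ℕ) (hL : 0 < L)
    (d : Fin Q.n → ℕ) (S : Fin (L+1) → Fin Q.n → ℕ) (hS : hasDimVec S d)
    (hreal : ∃ x ∈ TruncRepVar Q d K L, radLayering Q d K L x = S) :
    closure {x : TruncV Q d K L | radLayering Q d K L x.1 = S}
      = {x : TruncV Q d K L | x.1 ∈ FiltSet Q d K L S} := by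
  have : Infinite K := IsAlgClosed.instInfinite
  refine (closure_minimal (fun x hx ↦ ?_) ?_).antisymm fun x hx ↦ ?_
  · exact (mem_filtSet_iff hS).2
      ⟨_, isGradedFlag_radPow_iff.2 ⟨x.2, hx⟩, lowersFlag_radPow x.1⟩
  · exact (isClosed_filtSet hS).preimage continuous_subtype_val
  · rw [closure_subtype, mem_closure_zariskiTopology_iff]
    intro p hp
    obtain ⟨y, hy_trunc, hy_layering, hy_eval⟩ :=
      exists_radLayering_eq_of_mem_filtSet hS hreal hx hp
    exact ⟨y, ⟨⟨y, hy_trunc⟩, hy_layering, rfl⟩, hy_eval⟩
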